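/- Let d = 2 or d = 3, let Δt > 0 and L ≥ 0 satisfy Δt·L ≤ 1/4, and let w : ℝ^d → ℝ^d be an everywhere-differentiable map whose Jacobian matrix has Frobenius norm at most L at every point and which is bounded, with W := sup_{x ∈ ℝ^d} ‖w(x)‖. Let v : ℝ × ℝ^d → ℝ^m be continuously differentiable with compact support, and let t ∈ ℝ. Then (∫_{ℝ^d} ‖v(t, x) − v(t − Δt, x − Δt·w(x))‖² dx)^{1/2} ≤ √(2Δt) · [ (∫_{t−Δt}^{t} ∫_{ℝ^d} ‖∂_s v(s, y)‖² dy ds)^{1/2} + W · (∫_{t−Δt}^{t} ∫_{ℝ^d} ‖D_y v(s, y)‖_F² dy ds)^{1/2} ], where ∂_s v is the partial derivative of v in its first (time) variable, D_y v(s, y) is the Jacobian matrix of v(s, ·) at y, ‖·‖_F is its Frobenius norm, and all integrals are with respect to Lebesgue measure. -/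

import Mathlib

open MeasureTheory

/-- The Frobenius norm of the Jacobian matrix of `f` at `x`. -/
noncomputable def jacobianFrobeniusNorm {d m : ℕ}
    (f : EuclideanSpace ℝ (Fin d) → EuclideanSpace ℝ (Fin m))
    (x : EuclideanSpace ℝ (Fin d)) : ℝ :=
  Real.sqrt (∑ i, ∑ j, (fderiv ℝ f x (EuclideanSpace.single j (1 : ℝ)) i) ^ 2)

/-- The operator norm of a derivative is bounded by the Frobenius norm of the Jacobian. -/
theorem norm_fderiv_apply_le_jacobianFrobeniusNorm {d m : ℕ}
    (f : EuclideanSpace ℝ (Fin d) → EuclideanSpace ℝ (Fin m))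
    (x u : EuclideanSpace ℝ (Fin d)) :
    ‖fderiv ℝ f x u‖ ≤ jacobianFrobeniusNorm f x * ‖u‖ := by
  have hcoord : ∀ i, fderiv ℝ f x u i =
      ∑ j, fderiv ℝ f x (EuclideanSpace.single j (1 : ℝ)) i * u j := by
    intro i
    have hu : u = ∑ j, u j • EuclideanSpace.single j (1 : ℝ) := by
      simpa using ((EuclideanSpace.basisFun (Fin d) ℝ).sum_repr u).symm
    conv_lhs => rw [hu]
    simp [mul_comm]
  rw [jacobianFrobeniusNorm, EuclideanSpace.norm_eq, EuclideanSpace.norm_eq u,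
    ← Real.sqrt_mul (by positivity)]
  refine Real.sqrt_le_sqrt ?_
  rw [Finset.sum_mul]
  refine Finset.sum_le_sum fun i _ => ?_
  simp only [Real.norm_eq_abs, sq_abs]
  rw [hcoord]
  exact Finset.sum_mul_sq_le_sq_mul_sq _ _ _

theorem half_le_det_one_sub_of_sum_sq_le_two (M : Matrix (Fin 2) (Fin 2) ℝ)
    (hM : ∑ i, ∑ j, M i j ^ 2 ≤ 1 / 16) : 1 / 2 ≤ (1 - M).det := by
  simp only [Fin.sum_univ_two] at hM
  simp only [Matrix.det_fin_two, Matrix.sub_apply, Matrix.one_apply_eq, ne_eq, zero_ne_one,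
    one_ne_zero, not_false_eq_true, Matrix.one_apply_ne]
  nlinarith [sq_nonneg (M 0 0 - M 1 1), sq_nonneg (M 0 1 - M 1 0),
    sq_nonneg (M 0 1 + M 1 0), sq_nonneg (M 0 0 + M 1 1 - 1 / 4),
    sq_nonneg (M 0 0 - 1 / 4), sq_nonneg (M 1 1 - 1 / 4)]

theorem half_le_det_one_sub_of_sum_sq_le_three (M : Matrix (Fin 3) (Fin 3) ℝ)
    (hM : ∑ i, ∑ j, M i j ^ 2 ≤ 1 / 16) : 1 / 2 ≤ (1 - M).det := by
  have hdet : (1 - M).det = 1 - (M 0 0 + M 1 1 + M 2 2)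
      + (M 0 0 * M 1 1 - M 0 1 * M 1 0 + (M 0 0 * M 2 2 - M 0 2 * M 2 0)
        + (M 1 1 * M 2 2 - M 1 2 * M 2 1))
      - (M 0 0 * (M 1 1 * M 2 2 - M 1 2 * M 2 1) + M 0 1 * (M 1 2 * M 2 0 - M 1 0 * M 2 2)
        + M 0 2 * (M 1 0 * M 2 1 - M 1 1 * M 2 0)) := by
    simp [Matrix.det_fin_three]
    ring
  rw [hdet]
  simp only [Fin.sum_univ_three] at hM
  generalize M 0 0 = a at *
  generalize M 0 1 = b at *
  generalize M 0 2 = c at *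
  generalize M 1 0 = d at *
  generalize M 1 1 = e at *
  generalize M 1 2 = f at *
  generalize M 2 0 = g at *
  generalize M 2 1 = h at *
  generalize M 2 2 = k at *
  have hprod : ∀ p q : ℝ, p ^ 2 ≤ 1 / 16 → |q| ≤ 1 / 32 → p * q ≤ 1 / 128 := by
    intro p q hp hq
    have hp' : |p| ≤ 1 / 4 := abs_le_of_sq_le_sq (by linarith) (by norm_num)
    calc p * q ≤ |p| * |q| := by rw [← abs_mul]; exact le_abs_self _
      _ ≤ 1 / 4 * (1 / 32) := by gcongr
      _ = 1 / 128 := by norm_num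
  have h₁ := hprod a (e * k - f * h) (by nlinarith)
    (abs_le.2 ⟨by nlinarith [sq_nonneg (e + k), sq_nonneg (f - h)],
      by nlinarith [sq_nonneg (e - k), sq_nonneg (f + h)]⟩)
  have h₂ := hprod b (f * g - d * k) (by nlinarith)
    (abs_le.2 ⟨by nlinarith [sq_nonneg (f + g), sq_nonneg (d - k)],
      by nlinarith [sq_nonneg (f - g), sq_nonneg (d + k)]⟩)
  have h₃ := hprod c (d * h - e * g) (by nlinarith)
    (abs_le.2 ⟨by nlinarith [sq_nonneg (d + h), sq_nonneg (e - g)],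
      by nlinarith [sq_nonneg (d - h), sq_nonneg (e + g)]⟩)
  have htr : a + e + k ≤ 7 / 16 := by
    refine le_of_abs_le (abs_le_of_sq_le_sq ?_ (by norm_num))
    nlinarith [sq_nonneg (a - e), sq_nonneg (a - k), sq_nonneg (e - k)]
  have hsec : (a + e + k) ^ 2 / 2 - 1 / 32 ≤
      a * e - b * d + (a * k - c * g) + (e * k - f * h) := by
    nlinarith [sq_nonneg (b - d), sq_nonneg (c - g), sq_nonneg (f - h)]
  nlinarith [sq_nonneg (a + e + k - 7 / 16)]

/-- In dimensions two and three, a perturbation of the identity of Frobenius norm at most `1 / 4`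
has determinant at least `1 / 2`. -/
theorem half_le_det_id_sub {d : ℕ} (hd : d = 2 ∨ d = 3)
    (P : EuclideanSpace ℝ (Fin d) →L[ℝ] EuclideanSpace ℝ (Fin d))
    (hP : ∑ i, ∑ j, (P (EuclideanSpace.single j (1 : ℝ)) i) ^ 2 ≤ 1 / 16) :
    1 / 2 ≤ (ContinuousLinearMap.id ℝ (EuclideanSpace ℝ (Fin d)) - P).det := by
  set b := (EuclideanSpace.basisFun (Fin d) ℝ).toBasis
  have hentry : ∀ i j, LinearMap.toMatrix b b P.toLinearMap i j =
      P (EuclideanSpace.single j (1 : ℝ)) i := by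
    intro i j
    simp [b, LinearMap.toMatrix_apply]
  have hdet : (ContinuousLinearMap.id ℝ (EuclideanSpace ℝ (Fin d)) - P).det =
      (1 - LinearMap.toMatrix b b P.toLinearMap).det := by
    rw [ContinuousLinearMap.det, ← LinearMap.det_toMatrix b]
    congr 1
    rw [ContinuousLinearMap.toLinearMap_sub, map_sub, ContinuousLinearMap.coe_id,
      LinearMap.toMatrix_id]
  simp only [← hentry] at hP
  rw [hdet]
  generalize LinearMap.toMatrix b b P.toLinearMap = M at hP
  rcases hd with rfl | rfl
  · exact half_le_det_one_sub_of_sum_sq_le_two M hP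
  · exact half_le_det_one_sub_of_sum_sq_le_three M hP

/-- Composition with the approximate characteristic map at most doubles the integral of a
nonnegative function. -/
theorem lintegral_comp_characteristic_le {d : ℕ} (hd : d = 2 ∨ d = 3) {τ L : ℝ} (hτ : 0 ≤ τ)
    (hτL : τ * L ≤ 1 / 4) {w : EuclideanSpace ℝ (Fin d) → EuclideanSpace ℝ (Fin d)}
    (hw : Differentiable ℝ w) (hJ : ∀ x, jacobianFrobeniusNorm w x ≤ L)
    (g : EuclideanSpace ℝ (Fin d) → ENNReal) :
    ∫⁻ x, g (x - τ • w x) ≤ 2 * ∫⁻ y, g y := by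
  have hL : 0 ≤ L := (Real.sqrt_nonneg _).trans (hJ 0)
  have hderiv : ∀ x, HasFDerivAt (fun x => x - τ • w x)
      (ContinuousLinearMap.id ℝ _ - τ • fderiv ℝ w x) x := fun x =>
    (hasFDerivAt_id x).sub ((hw x).hasFDerivAt.const_smul τ)
  have hlip : ∀ x y, ‖w x - w y‖ ≤ L * ‖x - y‖ := fun x y =>
    convex_univ.norm_image_sub_le_of_norm_fderiv_le (𝕜 := ℝ) (fun z _ => hw z)
      (fun z _ => ContinuousLinearMap.opNorm_le_bound _ hL fun u =>
        (norm_fderiv_apply_le_jacobianFrobeniusNorm w z u).trans (by gcongr; exact hJ z))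
      (Set.mem_univ y) (Set.mem_univ x)
  have hinj : Function.Injective fun x => x - τ • w x := by
    intro x y hxy
    have hsub : x - y = τ • (w x - w y) := by
      rw [smul_sub, sub_eq_sub_iff_add_eq_add]
      have := sub_eq_sub_iff_add_eq_add.1 hxy
      rw [this]; abel
    have hnorm : ‖x - y‖ ≤ 1 / 4 * ‖x - y‖ := by
      calc ‖x - y‖ = τ * ‖w x - w y‖ := by
            conv_lhs => rw [hsub]
            rw [norm_smul, Real.norm_of_nonneg hτ]
        _ ≤ τ * (L * ‖x - y‖) := by gcongr; exact hlip x y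
        _ = τ * L * ‖x - y‖ := by ring
        _ ≤ 1 / 4 * ‖x - y‖ := by gcongr
    have : ‖x - y‖ = 0 := le_antisymm (by linarith) (norm_nonneg _)
    exact sub_eq_zero.1 (norm_eq_zero.1 this)
  have hdet : ∀ x, 1 / 2 ≤
      (ContinuousLinearMap.id ℝ (EuclideanSpace ℝ (Fin d)) - τ • fderiv ℝ w x).det := by
    intro x
    refine half_le_det_id_sub hd _ ?_
    have hsq : ∑ i, ∑ j, (fderiv ℝ w x (EuclideanSpace.single j (1 : ℝ)) i) ^ 2 ≤ L ^ 2 :=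
      (Real.sqrt_le_left hL).1 (hJ x)
    simp only [smul_apply, PiLp.smul_apply, smul_eq_mul, mul_pow,
      ← Finset.mul_sum]
    calc _ ≤ τ ^ 2 * L ^ 2 := by gcongr
      _ = (τ * L) ^ 2 := by ring
      _ ≤ (1 / 4) ^ 2 := by gcongr
      _ = 1 / 16 := by norm_num
  have hcov := lintegral_image_eq_lintegral_abs_det_fderiv_mul volume MeasurableSet.univ
    (fun x _ => (hderiv x).hasFDerivWithinAt) hinj.injOn g
  rw [Measure.restrict_univ] at hcov
  calc ∫⁻ x, g (x - τ • w x)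
      ≤ ∫⁻ x, 2 * (ENNReal.ofReal
          |(ContinuousLinearMap.id ℝ (EuclideanSpace ℝ (Fin d)) - τ • fderiv ℝ w x).det| *
            g (x - τ • w x)) := by
        refine lintegral_mono fun x => ?_
        rw [← mul_assoc]
        refine le_mul_of_one_le_left' ?_
        have htwo : (2 : ENNReal) = ENNReal.ofReal 2 := by simp
        refine le_of_le_of_eq (ENNReal.one_le_ofReal.2 ?_)
          ((ENNReal.ofReal_mul zero_le_two).trans (congrArg (· * _) htwo.symm))
        linarith [hdet x, le_abs_self
          (ContinuousLinearMap.id ℝ (EuclideanSpace ℝ (Fin d)) - τ • fderiv ℝ w x).det]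
    _ = 2 * ∫⁻ y in (fun x => x - τ • w x) '' Set.univ, g y := by
        rw [lintegral_const_mul' _ _ (by norm_num), hcov]
    _ ≤ 2 * ∫⁻ y, g y := by gcongr; exact Measure.restrict_le_self

/-- Minkowski's inequality in `L²` for nonnegative real functions. -/
theorem sqrt_integral_add_sq_le {α : Type*} [MeasurableSpace α] {μ : Measure α} {f g : α → ℝ}
    (hf₀ : 0 ≤ f) (hg₀ : 0 ≤ g) (hf : MemLp f 2 μ) (hg : MemLp g 2 μ) :
    √(∫ x, (f x + g x) ^ 2 ∂μ) ≤ √(∫ x, f x ^ 2 ∂μ) + √(∫ x, g x ^ 2 ∂μ) := by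
  have hcs := integral_mul_le_Lp_mul_Lq_of_nonneg (μ := μ) Real.HolderConjugate.two_two
    (.of_forall hf₀) (.of_forall hg₀) (by simpa using hf) (by simpa using hg)
  simp only [Real.rpow_ofNat, ← Real.sqrt_eq_rpow] at hcs
  have hfg : Integrable (fun x => f x * g x) μ := hf.integrable_mul hg
  have hexp : ∫ x, (f x + g x) ^ 2 ∂μ =
      ∫ x, f x ^ 2 ∂μ + 2 * ∫ x, f x * g x ∂μ + ∫ x, g x ^ 2 ∂μ := by
    have hsum : Integrable (fun x => f x ^ 2 + 2 * (f x * g x)) μ :=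
      hf.integrable_sq.add (hfg.const_mul 2)
    rw [← integral_const_mul, ← integral_add hf.integrable_sq (hfg.const_mul 2),
      ← integral_add hsum hg.integrable_sq]
    exact integral_congr_ae (.of_forall fun x => by ring)
  refine Real.sqrt_le_iff.2 ⟨by positivity, ?_⟩
  rw [hexp, add_sq, Real.sq_sqrt (integral_nonneg fun x => sq_nonneg _),
    Real.sq_sqrt (integral_nonneg fun x => sq_nonneg _)]
  linarith

/-- The Cauchy–Schwarz inequality against the constant function on an interval. -/
theorem sq_intervalIntegral_le {a b : ℝ} (hab : a ≤ b) {f : ℝ → ℝ} (hf : Continuous f)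
    (hf₀ : 0 ≤ f) :
    (∫ s in a..b, f s) ^ 2 ≤ (b - a) * ∫ s in a..b, f s ^ 2 := by
  rw [intervalIntegral.integral_of_le hab, intervalIntegral.integral_of_le hab]
  have hmem : MemLp f 2 (volume.restrict (Set.Ioc a b)) :=
    (memLp_two_iff_integrable_sq hf.aestronglyMeasurable).2
      ((hf.pow 2).integrableOn_Ioc)
  have hcs := integral_mul_le_Lp_mul_Lq_of_nonneg (μ := volume.restrict (Set.Ioc a b))
    Real.HolderConjugate.two_two (f := fun _ => (1 : ℝ)) (g := f)
    (.of_forall fun _ => zero_le_one) (.of_forall hf₀) (memLp_const 1) (by simpa using hmem)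
  simp only [Real.rpow_ofNat, ← Real.sqrt_eq_rpow, one_mul, one_pow, integral_const, smul_eq_mul,
    mul_one] at hcs
  have hvol : (volume.restrict (Set.Ioc a b)).real Set.univ = b - a := by
    simp [Measure.real, hab]
  rw [hvol] at hcs
  calc _ ≤ (√(b - a) * √(∫ s in Set.Ioc a b, f s ^ 2)) ^ 2 := by
        gcongr
        exact integral_nonneg hf₀
    _ = _ := by
        rw [mul_pow, Real.sq_sqrt (by linarith),
          Real.sq_sqrt (integral_nonneg fun x => sq_nonneg _)]

section SpaceTime

variable {d m : ℕ} {v : ℝ → EuclideanSpace ℝ (Fin d) → EuclideanSpace ℝ (Fin m)}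

theorem deriv_time_eq_fderiv_uncurry (hv : Differentiable ℝ (Function.uncurry v)) (s : ℝ)
    (y : EuclideanSpace ℝ (Fin d)) :
    deriv (fun τ => v τ y) s = fderiv ℝ (Function.uncurry v) (s, y) (1, 0) := by
  have hpath : HasDerivAt (fun τ : ℝ => (τ, y)) (1, 0) s :=
    (hasDerivAt_id s).prodMk (hasDerivAt_const s y)
  exact ((hv (s, y)).hasFDerivAt.comp_hasDerivAt s hpath).deriv

theorem fderiv_space_eq_fderiv_uncurry (hv : Differentiable ℝ (Function.uncurry v)) (s : ℝ)
    (y e : EuclideanSpace ℝ (Fin d)) :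
    fderiv ℝ (v s) y e = fderiv ℝ (Function.uncurry v) (s, y) (0, e) := by
  have h : HasFDerivAt (v s) _ y :=
    (hv (s, y)).hasFDerivAt.comp y (hasFDerivAt_prodMk_right s y)
  rw [h.fderiv]
  simp

theorem continuous_norm_deriv_time (hv : ContDiff ℝ 1 (Function.uncurry v)) :
    Continuous fun z : ℝ × EuclideanSpace ℝ (Fin d) => ‖deriv (fun τ => v τ z.2) z.1‖ := by
  simp only [deriv_time_eq_fderiv_uncurry (hv.differentiable one_ne_zero)]
  have := hv.continuous_fderiv one_ne_zero
  fun_prop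

theorem hasCompactSupport_norm_deriv_time (hv : ContDiff ℝ 1 (Function.uncurry v))
    (hvsupp : HasCompactSupport (Function.uncurry v)) :
    HasCompactSupport fun z : ℝ × EuclideanSpace ℝ (Fin d) =>
      ‖deriv (fun τ => v τ z.2) z.1‖ := by
  simp only [deriv_time_eq_fderiv_uncurry (hv.differentiable one_ne_zero)]
  exact (hvsupp.fderiv ℝ).comp_left
    (g := fun F : ℝ × EuclideanSpace ℝ (Fin d) →L[ℝ] EuclideanSpace ℝ (Fin m) => ‖F (1, 0)‖)
    (by simp)

theorem continuous_jacobianFrobeniusNorm_space (hv : ContDiff ℝ 1 (Function.uncurry v)) :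
    Continuous fun z : ℝ × EuclideanSpace ℝ (Fin d) => jacobianFrobeniusNorm (v z.1) z.2 := by
  simp only [jacobianFrobeniusNorm,
    fderiv_space_eq_fderiv_uncurry (hv.differentiable one_ne_zero)]
  have := hv.continuous_fderiv one_ne_zero
  fun_prop

theorem hasCompactSupport_jacobianFrobeniusNorm_space
    (hv : ContDiff ℝ 1 (Function.uncurry v))
    (hvsupp : HasCompactSupport (Function.uncurry v)) :
    HasCompactSupport fun z : ℝ × EuclideanSpace ℝ (Fin d) =>
      jacobianFrobeniusNorm (v z.1) z.2 := by
  simp only [jacobianFrobeniusNorm,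
    fderiv_space_eq_fderiv_uncurry (hv.differentiable one_ne_zero)]
  exact (hvsupp.fderiv ℝ).comp_left
    (g := fun F : ℝ × EuclideanSpace ℝ (Fin d) →L[ℝ] EuclideanSpace ℝ (Fin m) =>
      √(∑ i, ∑ j, (F (0, EuclideanSpace.single j (1 : ℝ)) i) ^ 2))
    (by simp)

/-- The increment of `v` along a straight characteristic is controlled by the integral of the
squared time and space derivatives along it. -/
theorem sq_norm_sub_along_characteristic_le (hv : ContDiff ℝ 1 (Function.uncurry v))
    {Δt W : ℝ} (hΔt : 0 ≤ Δt) (t : ℝ) (x ξ : EuclideanSpace ℝ (Fin d)) (hξ : ‖ξ‖ ≤ W) :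
    ‖v t x - v (t - Δt) (x - Δt • ξ)‖ ^ 2 ≤
      Δt * ∫ s in (t - Δt)..t, (‖deriv (fun τ => v τ (x - (t - s) • ξ)) s‖ +
        W * jacobianFrobeniusNorm (v s) (x - (t - s) • ξ)) ^ 2 := by
  have hdiff := hv.differentiable one_ne_zero
  have hcurve : Continuous fun s : ℝ => (s, x - (t - s) • ξ) := by fun_prop
  set γ' : ℝ → EuclideanSpace ℝ (Fin m) := fun s =>
    fderiv ℝ (Function.uncurry v) (s, x - (t - s) • ξ) (1, ξ) with hγ'
  have hγ'cont : Continuous γ' :=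
    ((hv.continuous_fderiv one_ne_zero).comp hcurve).clm_apply continuous_const
  have hderiv : ∀ s, HasDerivAt (fun s => v s (x - (t - s) • ξ)) (γ' s) s := by
    intro s
    have hpath : HasDerivAt (fun s : ℝ => x - (t - s) • ξ) ξ s := by
      simpa using (((hasDerivAt_id s).const_sub t).smul_const ξ).const_sub x
    exact (hdiff (s, x - (t - s) • ξ)).hasFDerivAt.comp_hasDerivAt s
      ((hasDerivAt_id s).prodMk hpath)
  have hftc : ∫ s in (t - Δt)..t, γ' s = v t x - v (t - Δt) (x - Δt • ξ) := by
    rw [intervalIntegral.integral_eq_sub_of_hasDerivAt (fun s _ => hderiv s)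
      (hγ'cont.intervalIntegrable _ _)]
    simp
  have hW : 0 ≤ W := (norm_nonneg ξ).trans hξ
  have hbound : ∀ s, ‖γ' s‖ ≤ ‖deriv (fun τ => v τ (x - (t - s) • ξ)) s‖ +
      W * jacobianFrobeniusNorm (v s) (x - (t - s) • ξ) := by
    intro s
    have hsplit : γ' s = deriv (fun τ => v τ (x - (t - s) • ξ)) s +
        fderiv ℝ (v s) (x - (t - s) • ξ) ξ := by
      rw [deriv_time_eq_fderiv_uncurry hdiff, fderiv_space_eq_fderiv_uncurry hdiff, ← map_add]
      simp [hγ']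
    rw [hsplit]
    refine (norm_add_le _ _).trans (add_le_add_right ?_ _)
    refine (norm_fderiv_apply_le_jacobianFrobeniusNorm _ _ _).trans ?_
    rw [mul_comm]
    exact mul_le_mul_of_nonneg_right hξ (Real.sqrt_nonneg _)
  have hle : t - Δt ≤ t := by linarith
  rw [← hftc]
  calc ‖∫ s in (t - Δt)..t, γ' s‖ ^ 2
      ≤ (∫ s in (t - Δt)..t, ‖γ' s‖) ^ 2 := by
        gcongr
        exact intervalIntegral.norm_integral_le_integral_norm hle
    _ ≤ Δt * ∫ s in (t - Δt)..t, ‖γ' s‖ ^ 2 := by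
        simpa using sq_intervalIntegral_le hle hγ'cont.norm fun s => norm_nonneg _
    _ ≤ _ := by
        refine mul_le_mul_of_nonneg_left ?_ hΔt
        refine intervalIntegral.integral_mono_on hle
          ((hγ'cont.norm.pow 2).intervalIntegrable _ _) ?_ fun s _ => by
            gcongr; exact hbound s
        refine Continuous.intervalIntegrable ?_ _ _
        have h₁ := (continuous_norm_deriv_time hv).comp hcurve
        have h₂ := (continuous_jacobianFrobeniusNorm_space hv).comp hcurve
        exact (h₁.add (h₂.const_mul W)).pow 2

end SpaceTime

/-- Estimate for the difference between `v(t, ·)` and the composition of `v(t - Δt, ·)`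
with the approximate characteristic map `x ↦ x - Δt·w(x)`. -/
theorem L2_time_diff_comp_characteristic (d m : ℕ) (hd : d = 2 ∨ d = 3)
    (Δt L : ℝ) (hΔt : 0 < Δt) (hL : 0 ≤ L) (hΔtL : Δt * L ≤ 1 / 4)
    (w : EuclideanSpace ℝ (Fin d) → EuclideanSpace ℝ (Fin d))
    (hw : Differentiable ℝ w)
    (hJ : ∀ x, jacobianFrobeniusNorm w x ≤ L)
    (hbdd : BddAbove (Set.range fun x => ‖w x‖))
    (v : ℝ → EuclideanSpace ℝ (Fin d) → EuclideanSpace ℝ (Fin m))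
    (hv : ContDiff ℝ 1 (Function.uncurry v))
    (hvsupp : HasCompactSupport (Function.uncurry v))
    (t : ℝ) :
    Real.sqrt (∫ x, ‖v t x - v (t - Δt) (x - Δt • w x)‖ ^ 2) ≤
      Real.sqrt (2 * Δt) *
        (Real.sqrt (∫ s in (t - Δt)..t, ∫ y, ‖deriv (fun τ => v τ y) s‖ ^ 2) +
          (⨆ x, ‖w x‖) *
            Real.sqrt (∫ s in (t - Δt)..t, ∫ y,
              (jacobianFrobeniusNorm (v s) y) ^ 2)) := by
  set W := ⨆ x, ‖w x‖
  have hwW : ∀ x, ‖w x‖ ≤ W := fun x => le_ciSup hbdd x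
  have hW : 0 ≤ W := (norm_nonneg _).trans (hwW 0)
  set A : ℝ × EuclideanSpace ℝ (Fin d) → ℝ := fun z => ‖deriv (fun τ => v τ z.2) z.1‖
  set B : ℝ × EuclideanSpace ℝ (Fin d) → ℝ := fun z => jacobianFrobeniusNorm (v z.1) z.2
  have hAc : Continuous A := continuous_norm_deriv_time hv
  have hBc : Continuous B := continuous_jacobianFrobeniusNorm_space hv
  set I := Set.Ioc (t - Δt) t
  set μ : Measure (ℝ × EuclideanSpace ℝ (Fin d)) := (volume.restrict I).prod volume with hμ
  have hmem : ∀ f : ℝ × EuclideanSpace ℝ (Fin d) → ℝ, Continuous f → HasCompactSupport f →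
      MemLp f 2 μ := fun f hf hfs => hf.memLp_of_hasCompactSupport hfs
  have hA2 : MemLp A 2 μ := hmem A hAc (hasCompactSupport_norm_deriv_time hv hvsupp)
  have hB2 : MemLp B 2 μ := hmem B hBc (hasCompactSupport_jacobianFrobeniusNorm_space hv hvsupp)
  have hGc : Continuous fun z => A z + W * B z := by fun_prop
  have hG2 : MemLp (fun z => A z + W * B z) 2 μ := hA2.add (hB2.const_mul W)
  have hIA : ∫ s in (t - Δt)..t, ∫ y, ‖deriv (fun τ => v τ y) s‖ ^ 2 = ∫ z, A z ^ 2 ∂μ := by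
    rw [intervalIntegral.integral_of_le (by linarith), hμ, integral_prod _ hA2.integrable_sq]
  have hIB : ∫ s in (t - Δt)..t, ∫ y, (jacobianFrobeniusNorm (v s) y) ^ 2 =
      ∫ z, B z ^ 2 ∂μ := by
    rw [intervalIntegral.integral_of_le (by linarith), hμ, integral_prod _ hB2.integrable_sq]
  rw [hIA, hIB]
  have hmink : √(∫ z, (A z + W * B z) ^ 2 ∂μ) ≤
      √(∫ z, A z ^ 2 ∂μ) + W * √(∫ z, B z ^ 2 ∂μ) := by
    refine (sqrt_integral_add_sq_le (f := A) (g := fun z => W * B z) (fun z => norm_nonneg _)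
      (fun z => mul_nonneg hW (Real.sqrt_nonneg _)) hA2 (hB2.const_mul W)).trans_eq ?_
    simp only [mul_pow]
    rw [integral_const_mul, Real.sqrt_mul (sq_nonneg W), Real.sqrt_sq hW]
  refine le_trans ?_ (mul_le_mul_of_nonneg_left hmink (Real.sqrt_nonneg _))
  rw [← Real.sqrt_mul (by positivity)]
  refine Real.sqrt_le_sqrt ?_
  set H : ℝ × EuclideanSpace ℝ (Fin d) → ENNReal :=
    fun z => ENNReal.ofReal ((A z + W * B z) ^ 2)
  have hHc : Continuous H := ENNReal.continuous_ofReal.comp (hGc.pow 2)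
  have hpoint : ∀ x, ENNReal.ofReal (‖v t x - v (t - Δt) (x - Δt • w x)‖ ^ 2) ≤
      ENNReal.ofReal Δt * ∫⁻ s in I, H (s, x - (t - s) • w x) := by
    intro x
    refine (ENNReal.ofReal_le_ofReal
      (sq_norm_sub_along_characteristic_le hv hΔt.le t x (w x) (hwW x))).trans_eq ?_
    have hc : Continuous fun s : ℝ =>
        (A (s, x - (t - s) • w x) + W * B (s, x - (t - s) • w x)) ^ 2 :=
      (hGc.comp (by fun_prop : Continuous fun s : ℝ => (s, x - (t - s) • w x))).pow 2
    rw [ENNReal.ofReal_mul hΔt.le, intervalIntegral.integral_of_le (by linarith),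
      ← ofReal_integral_eq_lintegral_ofReal hc.integrableOn_Ioc (.of_forall fun s => sq_nonneg _)]
  have hwc := hw.continuous
  have hswap : ∫⁻ x, ∫⁻ s in I, H (s, x - (t - s) • w x) =
      ∫⁻ s in I, ∫⁻ x, H (s, x - (t - s) • w x) := by
    refine lintegral_lintegral_swap (Continuous.aemeasurable ?_)
    exact hHc.comp (by fun_prop : Continuous fun p : EuclideanSpace ℝ (Fin d) × ℝ =>
      (p.2, p.1 - (t - p.2) • w p.1))
  have hvc : Continuous (Function.uncurry v) := hv.continuous
  have hdiffc : Continuous fun x => ‖v t x - v (t - Δt) (x - Δt • w x)‖ ^ 2 := by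
    have h₁ : Continuous fun x => v t x :=
      hvc.comp (by fun_prop : Continuous fun x : EuclideanSpace ℝ (Fin d) => (t, x))
    have h₂ : Continuous fun x => v (t - Δt) (x - Δt • w x) :=
      hvc.comp (by fun_prop : Continuous fun x : EuclideanSpace ℝ (Fin d) =>
        (t - Δt, x - Δt • w x))
    exact (h₁.sub h₂).norm.pow 2
  have hnonneg : 0 ≤ 2 * Δt * ∫ z, (A z + W * B z) ^ 2 ∂μ :=
    mul_nonneg (by positivity) (integral_nonneg fun z => sq_nonneg _)
  rw [integral_eq_lintegral_of_nonneg_ae (.of_forall fun x => sq_nonneg _)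
    hdiffc.aestronglyMeasurable]
  refine ENNReal.toReal_le_of_le_ofReal hnonneg ?_
  calc ∫⁻ x, ENNReal.ofReal (‖v t x - v (t - Δt) (x - Δt • w x)‖ ^ 2)
      ≤ ∫⁻ x, ENNReal.ofReal Δt * ∫⁻ s in I, H (s, x - (t - s) • w x) := lintegral_mono hpoint
    _ = ENNReal.ofReal Δt * ∫⁻ s in I, ∫⁻ x, H (s, x - (t - s) • w x) := by
        rw [lintegral_const_mul' _ _ ENNReal.ofReal_ne_top, hswap]
    _ ≤ ENNReal.ofReal Δt * ∫⁻ s in I, 2 * ∫⁻ y, H (s, y) := by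
        refine mul_le_mul_right (setLIntegral_mono' measurableSet_Ioc fun s hs => ?_) _
        refine lintegral_comp_characteristic_le hd (by linarith [hs.2]) ?_ hw hJ
          (fun y => H (s, y))
        exact (mul_le_mul_of_nonneg_right (by linarith [hs.1]) hL).trans hΔtL
    _ = ENNReal.ofReal Δt * (2 * ∫⁻ z, H z ∂μ) := by
        rw [lintegral_const_mul' _ _ (by norm_num), hμ, lintegral_prod _ hHc.aemeasurable]
    _ = ENNReal.ofReal (2 * Δt * ∫ z, (A z + W * B z) ^ 2 ∂μ) := by
        rw [ENNReal.ofReal_mul (by positivity), ENNReal.ofReal_mul zero_le_two,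
          ofReal_integral_eq_lintegral_ofReal hG2.integrable_sq (.of_forall fun z => sq_nonneg _),
          ENNReal.ofReal_ofNat]
        ring
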